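/- arXiv:math-ph/0401042 — 2 statements merged into one kernel-verified Lean document; each statement's English description precedes it below -/
import Mathlib

section
/- For every integer k, one has the lower bound 12 |k| π² ≤ I_k. -/
/- Common setting: Skyrme maps φ : ℝ³ → S³ ⊂ ℝ⁴ with weak partial derivatives. -/

open MeasureTheory Real Filter
open scoped Topology ENNReal BigOperators

noncomputable section

abbrev R3 : Type := Fin 3 → ℝ
abbrev R4 : Type := Fin 4 → ℝ

/-- Euclidean dot product on ℝ⁴. -/
def dot (u v : R4) : ℝ := ∑ a, u a * v a

/-- Squared Euclidean norm on ℝ⁴. -/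
def nsq (u : R4) : ℝ := dot u u

/-- |u∧v|² = |u|²|v|² − ⟨u,v⟩². -/
def wedgeSq (u v : R4) : ℝ := nsq u * nsq v - (dot u v) ^ 2

/-- Gram determinant of three vectors of ℝ⁴. -/
def gram (u v w : R4) : ℝ :=
  Matrix.det !![dot u u, dot u v, dot u w; dot v u, dot v v, dot v w; dot w u, dot w v, dot w w]

/-- Determinant of the 4×4 matrix with columns a, b, c, d. -/
def det4 (a b c d : R4) : ℝ := Matrix.det (Matrix.of fun i j => ![a, b, c, d] j i)

/-- Smooth compactly supported test functions on ℝ³. -/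
def IsTestFun {E : Type*} [NormedAddCommGroup E] [NormedSpace ℝ E] (ψ : R3 → E) : Prop :=
  ContDiff ℝ (⊤ : ℕ∞) ψ ∧ HasCompactSupport ψ

/-- A weakly differentiable map φ : ℝ³ → S³ ⊂ ℝ⁴ together with its weak
partial derivatives `pderiv i = ∂ᵢφ`. -/
structure SkyrmeMap where
  toFun : R3 → R4
  pderiv : Fin 3 → R3 → R4
  meas : Measurable toFun
  pderiv_locInt : ∀ i, LocallyIntegrable (pderiv i) volume
  sphere : ∀ᵐ x : R3, nsq (toFun x) = 1
  weak : ∀ (i : Fin 3) (a : Fin 4) (ψ : R3 → ℝ), IsTestFun ψ →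
    ∫ x : R3, fderiv ℝ ψ x (Pi.single i 1) * toFun x a
      = - ∫ x : R3, ψ x * pderiv i x a

/-- |∇φ|² = Σᵢ |∂ᵢφ|². -/
def gradSq (φ : SkyrmeMap) (x : R3) : ℝ := ∑ i, nsq (φ.pderiv i x)

/-- |A(φ)|² = Σᵢⱼ |∂ᵢφ∧∂ⱼφ|². -/
def ASq (φ : SkyrmeMap) (x : R3) : ℝ := ∑ i, ∑ j, wedgeSq (φ.pderiv i x) (φ.pderiv j x)

/-- The Skyrme energy density |∇φ|² + |A(φ)|². -/
def energyDensity (φ : SkyrmeMap) (x : R3) : ℝ := gradSq φ x + ASq φ x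

/-- φ ∈ X : finite Skyrme energy. -/
def memX (φ : SkyrmeMap) : Prop := Integrable (energyDensity φ) volume

/-- The Skyrme energy ℰ(φ). -/
def energy (φ : SkyrmeMap) : ℝ := ∫ x, energyDensity φ x

/-- det(φ, ∇φ)(x). -/
def detDen (φ : SkyrmeMap) (x : R3) : ℝ :=
  det4 (φ.toFun x) (φ.pderiv 0 x) (φ.pderiv 1 x) (φ.pderiv 2 x)

/-- The topological degree d(φ) = (1/(2π²)) ∫ det(φ,∇φ). -/
def degree (φ : SkyrmeMap) : ℝ := (1 / (2 * π ^ 2)) * ∫ x, detDen φ x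

/-- I_k = inf of the energy over maps of degree k. -/
def Skyrme.I (k : ℤ) : ℝ :=
  sInf {E : ℝ | ∃ φ : SkyrmeMap, memX φ ∧ degree φ = (k : ℝ) ∧ energy φ = E}

/-- The north pole P = (0,0,0,1) of S³. -/
def northPole : R4 := ![0, 0, 0, 1]

/-- The Euclidean ball B(y,r) in ℝ³. -/
def eball (y : R3) (r : ℝ) : Set R3 := {x | ∑ i, (x i - y i) ^ 2 < r ^ 2}

/-!
In Plücker coordinates, `det (a, b, c, d)` is the pairing of the bivector `a ∧ b` with the Hodge
dual of `c ∧ d`, so for a unit vector `a` the Cauchy–Schwarz inequality gives `|det (a, b, c, d)|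
≤ |b| |c ∧ d|`. With AM–GM, `2√2 |det (φ, ∇φ)| ≤ |∂ᵢφ|² + 2 |∂ⱼφ ∧ ∂ₖφ|²` for the three cyclic
`(i, j, k)`; these add up to `6√2 |det (φ, ∇φ)| ≤ |∇φ|² + |A(φ)|²`, which integrates to the bound.

Since `sInf ∅ = 0`, the bound on `I_k` also requires a finite-energy map of degree `k`. A hedgehog
`x ↦ (sin θ · x / |x|, cos θ)` with `θ` a radial function going from `kπ` at the origin to `0` at
infinity will do: its degree is `(2 / π) ∫₀^{kπ} sin² θ dθ = k`.
-/

lemma dot_comm (u v : R4) : dot u v = dot v u := dotProduct_comm u v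

lemma nsq_nonneg (u : R4) : 0 ≤ nsq u := dotProduct_self_star_nonneg u

/-- The Plücker coordinates `(p₀₁, p₀₂, p₀₃, p₂₃, p₃₁, p₁₂)`, `pᵢⱼ = uᵢ vⱼ - uⱼ vᵢ`, of the
bivector `u ∧ v`, ordered so that the Hodge star is the shift `i ↦ i + 3`. -/
def plucker (u v : R4) : Fin 6 → ℝ :=
  ![u 0 * v 1 - u 1 * v 0, u 0 * v 2 - u 2 * v 0, u 0 * v 3 - u 3 * v 0,
    u 2 * v 3 - u 3 * v 2, u 3 * v 1 - u 1 * v 3, u 1 * v 2 - u 2 * v 1]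

lemma sum_plucker_sq (u v : R4) : ∑ i, plucker u v i ^ 2 = wedgeSq u v := by
  simp only [plucker, wedgeSq, nsq, dot, Fin.sum_univ_six, Fin.sum_univ_four,
    Matrix.cons_val_zero, Matrix.cons_val_one, Matrix.cons_val]
  ring

lemma det4_eq_sum_plucker (a b c d : R4) :
    det4 a b c d = ∑ i, plucker a b i * plucker c d (i + 3) := by
  simp [det4, plucker, Matrix.det_succ_row_zero, Fin.sum_univ_succ, Fin.succAbove]
  ring

lemma wedgeSq_nonneg (u v : R4) : 0 ≤ wedgeSq u v :=
  sum_plucker_sq u v ▸ Finset.sum_nonneg fun _ _ => sq_nonneg _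

lemma wedgeSq_le_nsq_mul_nsq (u v : R4) : wedgeSq u v ≤ nsq u * nsq v :=
  sub_le_self _ (sq_nonneg _)

lemma det4_sq_le (a b c d : R4) : det4 a b c d ^ 2 ≤ wedgeSq a b * wedgeSq c d := by
  have shift : ∑ i, plucker c d (i + 3) ^ 2 = ∑ i, plucker c d i ^ 2 :=
    Equiv.sum_comp (Equiv.addRight 3) fun i => plucker c d i ^ 2
  rw [det4_eq_sum_plucker, ← sum_plucker_sq, ← sum_plucker_sq, ← shift]
  exact Finset.sum_mul_sq_le_sq_mul_sq _ _ _

lemma det4_cyclic (a : R4) (u : Fin 3 → R4) (i : Fin 3) :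
    det4 a (u i) (u (i + 1)) (u (i + 2)) = det4 a (u 0) (u 1) (u 2) := by
  simp only [det4_eq_sum_plucker, plucker, Fin.sum_univ_six]
  fin_cases i <;> simp only [Fin.reduceFinMk, Fin.zero_eta, Fin.mk_one, Fin.reduceAdd, zero_add,
    Matrix.cons_val_zero, Matrix.cons_val_one, Matrix.cons_val] <;> ring

lemma sum_sum_wedgeSq (u : Fin 3 → R4) :
    ∑ i, ∑ j, wedgeSq (u i) (u j) = 2 * ∑ i, wedgeSq (u (i + 1)) (u (i + 2)) := by
  simp only [Fin.sum_univ_three, wedgeSq, nsq, dot_comm (u 1) (u 0), dot_comm (u 2) (u 0),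
    dot_comm (u 2) (u 1), zero_add, Fin.reduceAdd]
  ring

lemma two_mul_sqrt_two_mul_abs_det4_le {a : R4} (ha : nsq a = 1) (b c d : R4) :
    2 * (√2 * |det4 a b c d|) ≤ nsq b + 2 * wedgeSq c d := by
  refine two_mul_le_add_of_sq_le_mul (nsq_nonneg b)
    (mul_nonneg zero_le_two (wedgeSq_nonneg c d)) ?_
  calc (√2 * |det4 a b c d|) ^ 2 = 2 * det4 a b c d ^ 2 := by
        rw [mul_pow, sq_abs, Real.sq_sqrt zero_le_two]
    _ ≤ 2 * (wedgeSq a b * wedgeSq c d) := by gcongr; exact det4_sq_le a b c d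
    _ ≤ 2 * (nsq a * nsq b * wedgeSq c d) := by
        gcongr
        · exact wedgeSq_nonneg c d
        · exact wedgeSq_le_nsq_mul_nsq a b
    _ = nsq b * (2 * wedgeSq c d) := by rw [ha]; ring

lemma six_mul_sqrt_two_mul_abs_det4_le {a : R4} (ha : nsq a = 1) (u : Fin 3 → R4) :
    6 * √2 * |det4 a (u 0) (u 1) (u 2)| ≤
      ∑ i, nsq (u i) + ∑ i, ∑ j, wedgeSq (u i) (u j) :=
  calc 6 * √2 * |det4 a (u 0) (u 1) (u 2)|
      = ∑ i, 2 * (√2 * |det4 a (u i) (u (i + 1)) (u (i + 2))|) := by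
        simp only [det4_cyclic, Finset.sum_const, Finset.card_univ, Fintype.card_fin, nsmul_eq_mul]
        ring
    _ ≤ ∑ i, (nsq (u i) + 2 * wedgeSq (u (i + 1)) (u (i + 2))) :=
        Finset.sum_le_sum fun i _ => two_mul_sqrt_two_mul_abs_det4_le ha _ _ _
    _ = _ := by rw [Finset.sum_add_distrib, sum_sum_wedgeSq, Finset.mul_sum]

lemma twelve_mul_sqrt_two_mul_abs_degree_le_energy {φ : SkyrmeMap} (hφ : memX φ) :
    12 * √2 * |degree φ| * π ^ 2 ≤ energy φ := by
  have pointwise : ∀ᵐ x : R3, ‖6 * √2 * detDen φ x‖ ≤ energyDensity φ x := by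
    filter_upwards [φ.sphere] with x hx
    rw [norm_mul, Real.norm_of_nonneg (by positivity), Real.norm_eq_abs]
    exact six_mul_sqrt_two_mul_abs_det4_le hx fun i => φ.pderiv i x
  calc 12 * √2 * |degree φ| * π ^ 2 = ‖∫ x, 6 * √2 * detDen φ x‖ := by
        rw [integral_const_mul, degree, norm_mul, Real.norm_of_nonneg (by positivity),
          Real.norm_eq_abs, abs_mul, abs_of_nonneg (by positivity)]
        field_simp
        ring
    _ ≤ energy φ := norm_integral_le_of_norm_le hφ pointwise

lemma fderiv_apply_coord {E ι : Type*} [NormedAddCommGroup E] [NormedSpace ℝ E] [Finite ι]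
    {f : E → ι → ℝ} {x : E} (hf : DifferentiableAt ℝ f x) (v : E) (i : ι) :
    fderiv ℝ (fun y => f y i) x v = fderiv ℝ f x v i := by
  have := Fintype.ofFinite ι
  rw [fderiv_apply hf]
  rfl

section Smooth

variable {E F : Type*} [NormedAddCommGroup E] [NormedSpace ℝ E]
  [NormedAddCommGroup F] [NormedSpace ℝ F]

lemma continuous_fderiv_apply_const {f : E → F} (hf : ContDiff ℝ 1 f) (v : E) :
    Continuous (fderiv ℝ f · v) :=
  (hf.continuous_fderiv one_ne_zero).clm_apply continuous_const

lemma integral_mul_fderiv_eq_neg_of_hasCompactSupport [FiniteDimensional ℝ E]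
    [MeasurableSpace E] [BorelSpace E] {μ : Measure E} [μ.IsAddHaarMeasure] {ψ f : E → ℝ}
    (hψ : ContDiff ℝ 1 ψ) (hsupp : HasCompactSupport ψ) (hf : ContDiff ℝ 1 f) (v : E) :
    ∫ x, ψ x * fderiv ℝ f x v ∂μ = -∫ x, fderiv ℝ ψ x v * f x ∂μ :=
  integral_mul_fderiv_eq_neg_fderiv_mul_of_integrable
    (((continuous_fderiv_apply_const hψ v).mul hf.continuous).integrable_of_hasCompactSupport
      (hsupp.fderiv_apply ℝ v).mul_right)
    ((hψ.continuous.mul (continuous_fderiv_apply_const hf v)).integrable_of_hasCompactSupport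
      hsupp.mul_right)
    ((hψ.continuous.mul hf.continuous).integrable_of_hasCompactSupport hsupp.mul_right)
    (fun x _ => hψ.differentiable one_ne_zero x) (fun x _ => hf.differentiable one_ne_zero x)

end Smooth

/-- A `C¹` map into the sphere as a Skyrme map, its classical partial derivatives serving as the
weak ones. -/
def SkyrmeMap.ofContDiff (φ : R3 → R4) (hφ : ContDiff ℝ 1 φ) (hsphere : ∀ x, nsq (φ x) = 1) :
    SkyrmeMap where
  toFun := φ
  pderiv i x := fderiv ℝ φ x (Pi.single i 1)
  meas := hφ.continuous.measurable
  pderiv_locInt _ := (continuous_fderiv_apply_const hφ _).locallyIntegrable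
  sphere := ae_of_all _ hsphere
  weak i a ψ hψ := by
    simp only [← fderiv_apply_coord (hφ.differentiable one_ne_zero _)]
    rw [integral_mul_fderiv_eq_neg_of_hasCompactSupport (hψ.1.of_le (by simp)) hψ.2
      (contDiff_pi.1 hφ a), neg_neg]

lemma memX_ofContDiff {φ : R3 → R4} (hφ : ContDiff ℝ 1 φ) (hsphere : ∀ x, nsq (φ x) = 1)
    {p : R4} (hp : HasCompactSupport fun x => φ x - p) :
    memX (SkyrmeMap.ofContDiff φ hφ hsphere) := by
  have hsupp : HasCompactSupport (fderiv ℝ φ) := by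
    rw [← funext fun x => fderiv_sub_const (f := φ) (x := x) (𝕜 := ℝ) p]
    exact hp.fderiv ℝ
  refine Continuous.integrable_of_hasCompactSupport ?_ (hsupp.mono fun x => mt fun hx => ?_)
  · have (i : Fin 3) (a : Fin 4) : Continuous fun x => fderiv ℝ φ x (Pi.single i 1) a :=
      (continuous_apply a).comp (continuous_fderiv_apply_const hφ _)
    unfold energyDensity gradSq ASq wedgeSq nsq dot SkyrmeMap.ofContDiff
    fun_prop
  · simp [energyDensity, gradSq, ASq, wedgeSq, nsq, dot, SkyrmeMap.ofContDiff, hx]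

section Radial

variable {ι : Type*} [Fintype ι]

lemma contDiff_dotProduct_self {n : WithTop ℕ∞} : ContDiff ℝ n fun x : ι → ℝ => x ⬝ᵥ x := by
  unfold dotProduct
  fun_prop

lemma hasFDerivAt_dotProduct_self (x : ι → ℝ) :
    HasFDerivAt (fun y : ι → ℝ => y ⬝ᵥ y)
      (∑ i, (2 * x i) • ContinuousLinearMap.proj (R := ℝ) (φ := fun _ => ℝ) i) x := by
  refine (HasFDerivAt.fun_sum fun i _ =>
    .mul (hasFDerivAt_apply (𝕜 := ℝ) i x) (hasFDerivAt_apply i x)).congr_fderiv ?_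
  simp only [two_mul, add_smul]

lemma hasCompactSupport_comp_dotProduct_self {M : Type*} [Zero M] {f : ℝ → M}
    (hf : HasCompactSupport f) : HasCompactSupport fun x : ι → ℝ => f (x ⬝ᵥ x) := by
  obtain ⟨R, hR⟩ := hf.isCompact.bddAbove
  refine .of_support_subset_isCompact (isCompact_closedBall (0 : ι → ℝ) √R) fun x hx => ?_
  rw [mem_closedBall_zero_iff, pi_norm_le_iff_of_nonneg (Real.sqrt_nonneg R)]
  intro i
  calc |x i| ≤ √(x ⬝ᵥ x) := Real.abs_le_sqrt (sq (x i) ▸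
        Finset.single_le_sum (fun j _ => mul_self_nonneg (x j)) (Finset.mem_univ i))
    _ ≤ √R := Real.sqrt_le_sqrt (hR (subset_tsupport f hx))

lemma fderiv_comp_dotProduct_self_apply {f : ℝ → ℝ} (hf : Differentiable ℝ f) (x v : ι → ℝ) :
    fderiv ℝ (fun y => f (y ⬝ᵥ y)) x v = 2 * deriv f (x ⬝ᵥ x) * (x ⬝ᵥ v) := by
  have h : HasFDerivAt (fun y : ι → ℝ => f (y ⬝ᵥ y)) _ x :=
    (hf _).hasDerivAt.comp_hasFDerivAt (f := fun y => y ⬝ᵥ y) x (hasFDerivAt_dotProduct_self x)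
  rw [h.fderiv]
  simp [dotProduct, Finset.mul_sum, mul_assoc, mul_left_comm]

lemma fderiv_comp_dotProduct_self_mul_apply {f : ℝ → ℝ} (hf : Differentiable ℝ f) (j : ι)
    (x v : ι → ℝ) :
    fderiv ℝ (fun y => f (y ⬝ᵥ y) * y j) x v =
      2 * deriv f (x ⬝ᵥ x) * (x ⬝ᵥ v) * x j + f (x ⬝ᵥ x) * v j := by
  have hradial : DifferentiableAt ℝ (fun y : ι → ℝ => f (y ⬝ᵥ y)) x :=
    (hf _).fun_comp' (g := f) x (hasFDerivAt_dotProduct_self x).differentiableAt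
  have hcoord : HasFDerivAt (fun y : ι → ℝ => y j) _ x :=
    hasFDerivAt_apply (𝕜 := ℝ) j x
  rw [fderiv_fun_mul hradial hcoord.differentiableAt, hcoord.fderiv]
  simp only [add_apply, smul_apply, ContinuousLinearMap.proj_apply, smul_eq_mul,
    fderiv_comp_dotProduct_self_apply hf]
  ring

end Radial

/-- Spherical coordinates with `t = |x|²`, for which `4πr² dr = 2π√t dt`. -/
lemma integral_comp_dotProduct_self {E : Type*} [NormedAddCommGroup E] [NormedSpace ℝ E]
    (f : ℝ → E) :
    ∫ x : R3, f (x ⬝ᵥ x) = (2 * π) • ∫ t in Set.Ioi (0 : ℝ), √t • f t := by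
  have hball : volume.real (Metric.ball (0 : EuclideanSpace ℝ (Fin 3)) 1) = 4 / 3 * π := by
    rw [measureReal_def, EuclideanSpace.volume_ball_fin_three, ENNReal.ofReal_one, one_pow,
      one_mul, ENNReal.toReal_ofReal (by positivity)]
    ring
  have hsubst : ∫ r in Set.Ioi (0 : ℝ), (2 * r ^ 2) • f (r ^ 2) =
      ∫ t in Set.Ioi (0 : ℝ), √t • f t := by
    rw [← integral_comp_rpow_Ioi_of_pos (g := fun t => √t • f t) zero_lt_two]
    refine setIntegral_congr_fun measurableSet_Ioi fun r (hr : 0 < r) => ?_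
    rw [Real.rpow_two, Real.sqrt_sq hr.le, smul_smul]
    norm_num [mul_assoc, ← sq]
  calc ∫ x : R3, f (x ⬝ᵥ x) = ∫ y : EuclideanSpace ℝ (Fin 3), f (‖y‖ ^ 2) := by
        rw [← (PiLp.volume_preserving_ofLp (Fin 3)).integral_comp
          (MeasurableEquiv.toLp 2 R3).symm.measurableEmbedding]
        simp only [EuclideanSpace.real_norm_sq_eq, dotProduct, ← sq]
    _ = 3 • (4 / 3 * π) • ∫ r in Set.Ioi (0 : ℝ), r ^ 2 • f (r ^ 2) := by
        rw [integral_fun_norm_addHaar volume fun r => f (r ^ 2), finrank_euclideanSpace_fin, hball]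
    _ = (2 * π) • ∫ r in Set.Ioi (0 : ℝ), (2 * r ^ 2) • f (r ^ 2) := by
        simp only [mul_smul, integral_smul]
        module
    _ = (2 * π) • ∫ t in Set.Ioi (0 : ℝ), √t • f t := by rw [hsubst]

/-- The hedgehog ansatz `x ↦ (h(|x|²) x, c(|x|²))` for a map `ℝ³ → ℝ⁴` equivariant under rotations.
The profiles are functions of `|x|²`, which is smooth at the origin, unlike `|x|`. -/
def hedgehogField (h c : ℝ → ℝ) (x : R3) : R4 :=
  ![h (x ⬝ᵥ x) * x 0, h (x ⬝ᵥ x) * x 1, h (x ⬝ᵥ x) * x 2, c (x ⬝ᵥ x)]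

/-- The determinant `det(φ, ∇φ)` of a hedgehog field as a function of `t = |x|²`. -/
def hedgehogDet (h c : ℝ → ℝ) (t : ℝ) : ℝ :=
  2 * t * h t ^ 2 * (deriv c t * h t - c t * deriv h t) - c t * h t ^ 3

section HedgehogField

variable {h c : ℝ → ℝ}

lemma nsq_hedgehogField (h c : ℝ → ℝ) (x : R3) :
    nsq (hedgehogField h c x) = h (x ⬝ᵥ x) ^ 2 * (x ⬝ᵥ x) + c (x ⬝ᵥ x) ^ 2 := by
  have hx : x ⬝ᵥ x = x 0 * x 0 + x 1 * x 1 + x 2 * x 2 := Fin.sum_univ_three _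
  simp only [nsq, dot, hedgehogField, Fin.sum_univ_four, Matrix.cons_val_zero,
    Matrix.cons_val_one, Matrix.cons_val]
  linear_combination -h (x ⬝ᵥ x) ^ 2 * hx

lemma contDiff_hedgehogField (hh : ContDiff ℝ 1 h) (hc : ContDiff ℝ 1 c) :
    ContDiff ℝ 1 (hedgehogField h c) := by
  have hradial (j : Fin 3) : ContDiff ℝ 1 fun x : R3 => h (x ⬝ᵥ x) * x j :=
    (hh.comp contDiff_dotProduct_self).mul (contDiff_apply ℝ ℝ j)
  refine contDiff_pi.2 fun a => ?_
  fin_cases a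
  exacts [hradial 0, hradial 1, hradial 2, hc.comp contDiff_dotProduct_self]

lemma fderiv_hedgehogField_apply (hh : ContDiff ℝ 1 h) (hc : ContDiff ℝ 1 c) (x v : R3) :
    fderiv ℝ (hedgehogField h c) x v =
      ![2 * deriv h (x ⬝ᵥ x) * (x ⬝ᵥ v) * x 0 + h (x ⬝ᵥ x) * v 0,
        2 * deriv h (x ⬝ᵥ x) * (x ⬝ᵥ v) * x 1 + h (x ⬝ᵥ x) * v 1,
        2 * deriv h (x ⬝ᵥ x) * (x ⬝ᵥ v) * x 2 + h (x ⬝ᵥ x) * v 2,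
        2 * deriv c (x ⬝ᵥ x) * (x ⬝ᵥ v)] := by
  have hradial := fderiv_comp_dotProduct_self_mul_apply (ι := Fin 3) (hh.differentiable one_ne_zero)
  have hlast := fderiv_comp_dotProduct_self_apply (hc.differentiable one_ne_zero) x v
  ext a
  rw [← fderiv_apply_coord ((contDiff_hedgehogField hh hc).differentiable one_ne_zero x)]
  fin_cases a
  exacts [hradial 0 x v, hradial 1 x v, hradial 2 x v, hlast]

lemma det4_hedgehogField (hh : ContDiff ℝ 1 h) (hc : ContDiff ℝ 1 c) (x : R3) :
    det4 (hedgehogField h c x) (fderiv ℝ (hedgehogField h c) x (Pi.single 0 1))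
        (fderiv ℝ (hedgehogField h c) x (Pi.single 1 1))
        (fderiv ℝ (hedgehogField h c) x (Pi.single 2 1)) =
      hedgehogDet h c (x ⬝ᵥ x) := by
  have hx : x ⬝ᵥ x = x 0 * x 0 + x 1 * x 1 + x 2 * x 2 := Fin.sum_univ_three _
  simp only [fderiv_hedgehogField_apply hh hc, dotProduct_single_one, hedgehogField, hedgehogDet]
  generalize h (x ⬝ᵥ x) = h₀, deriv h (x ⬝ᵥ x) = h₁, c (x ⬝ᵥ x) = c₀, deriv c (x ⬝ᵥ x) = c₁
  rw [hx]
  simp [det4_eq_sum_plucker, plucker, Fin.sum_univ_six]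
  ring

end HedgehogField

lemma integral_Ioi_sin_sq_mul_deriv {θ : ℝ → ℝ} (hθ : ContDiff ℝ 1 θ) (hsupp : HasCompactSupport θ)
    (a : ℝ) :
    ∫ t in Set.Ioi a, sin (θ t) ^ 2 * deriv θ t = sin (2 * θ a) / 4 - θ a / 2 := by
  have hderiv : deriv (fun t => θ t / 2 - sin (2 * θ t) / 4) =
      fun t => sin (θ t) ^ 2 * deriv θ t := by
    ext t
    have h := (hθ.differentiable one_ne_zero t).hasDerivAt
    have hprimitive := (h.div_const 2).fun_sub ((h.const_mul 2).sin.div_const 4)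
    rw [hprimitive.deriv, Real.cos_two_mul, Real.cos_sq']
    ring
  rw [← hderiv, HasCompactSupport.integral_Ioi_deriv_eq (by fun_prop), neg_sub]
  exact hsupp.comp_left (g := fun u => u / 2 - sin (2 * u) / 4) (by simp)

/-- A hedgehog profile of degree `k`: the angle between `φ(x)` and the north pole as a function of
`t = |x|²`. It is constant near the origin so that the resulting map is smooth there, and vanishes
near infinity so that the energy is finite. -/
structure HedgehogProfile (k : ℤ) where
  angle : ℝ → ℝ
  contDiff_angle : ContDiff ℝ 1 angle
  hasCompactSupport_angle : HasCompactSupport angle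
  angle_eventuallyEq : angle =ᶠ[𝓝 0] fun _ => k * π

namespace HedgehogProfile

variable {k : ℤ}

/-- The profile `kπχ` of degree `k`, for a bump function `χ` centred at the origin. -/
def ofBump (k : ℤ) (χ : ContDiffBump (0 : ℝ)) : HedgehogProfile k where
  angle t := k * π * χ t
  contDiff_angle := contDiff_const.mul χ.contDiff
  hasCompactSupport_angle := χ.hasCompactSupport.mul_left
  angle_eventuallyEq := χ.eventuallyEq_one.mono fun t ht => by simp [ht]

variable (P : HedgehogProfile k)

/-- The first profile `h = sin θ / √t` of the hedgehog with angle `θ`. For `t ≤ 0` it is `0`, by the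
junk values of the square root and the division. -/
def amplitude (t : ℝ) : ℝ := sin (P.angle t) / √t

/-- The second profile `c = cos θ` of the hedgehog with angle `θ`. -/
def height (t : ℝ) : ℝ := cos (P.angle t)

lemma contDiff_height : ContDiff ℝ 1 P.height := P.contDiff_angle.cos

lemma contDiff_amplitude : ContDiff ℝ 1 P.amplitude := by
  refine contDiff_iff_contDiffAt.2 fun t => ?_
  rcases lt_trichotomy t 0 with ht | rfl | ht
  · refine contDiffAt_const (c := 0) |>.congr_of_eventuallyEq ?_
    filter_upwards [Iio_mem_nhds ht] with s hs
    rw [amplitude, Real.sqrt_eq_zero_of_nonpos (le_of_lt hs), div_zero]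
  · refine contDiffAt_const (c := 0) |>.congr_of_eventuallyEq ?_
    filter_upwards [P.angle_eventuallyEq] with s hs
    rw [amplitude, hs, Real.sin_int_mul_pi, zero_div]
  · exact P.contDiff_angle.sin.contDiffAt.div (contDiffAt_id.sqrt ht.ne') (Real.sqrt_ne_zero'.2 ht)

lemma amplitude_sq_mul_add_height_sq {t : ℝ} (ht : 0 ≤ t) :
    P.amplitude t ^ 2 * t + P.height t ^ 2 = 1 := by
  rcases ht.eq_or_lt with rfl | ht
  · rw [mul_zero, zero_add, height, P.angle_eventuallyEq.eq_of_nhds, Real.cos_sq',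
      Real.sin_int_mul_pi, zero_pow two_ne_zero, sub_zero]
  · rw [amplitude, height, div_pow, Real.sq_sqrt ht.le, div_mul_cancel₀ _ ht.ne',
      Real.sin_sq_add_cos_sq]

lemma sqrt_mul_hedgehogDet {t : ℝ} (ht : 0 < t) :
    √t * hedgehogDet P.amplitude P.height t = -2 * (sin (P.angle t) ^ 2 * deriv P.angle t) := by
  have hangle := (P.contDiff_angle.differentiable one_ne_zero t).hasDerivAt
  have hheight : deriv P.height t = -sin (P.angle t) * deriv P.angle t := hangle.cos.deriv
  have hamplitude : deriv P.amplitude t = _ :=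
    (hangle.sin.div (Real.hasDerivAt_sqrt ht.ne') (Real.sqrt_ne_zero'.2 ht)).deriv
  rw [hedgehogDet, hheight, hamplitude, amplitude, height]
  have hs : 0 < √t := Real.sqrt_pos.2 ht
  have hsq : t = √t ^ 2 := (Real.sq_sqrt ht.le).symm
  generalize √t = s at *
  subst hsq
  field_simp
  linear_combination -2 * s ^ 2 * sin (P.angle (s ^ 2)) ^ 2 * deriv P.angle (s ^ 2) *
    Real.sin_sq_add_cos_sq (P.angle (s ^ 2))

/-- The sphere-valued map `x ↦ (sin θ · x / |x|, cos θ)` with `θ = P.angle |x|²`. -/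
def toSkyrmeMap : SkyrmeMap :=
  SkyrmeMap.ofContDiff (hedgehogField P.amplitude P.height)
    (contDiff_hedgehogField P.contDiff_amplitude P.contDiff_height) fun x => by
      rw [nsq_hedgehogField]
      exact P.amplitude_sq_mul_add_height_sq (dotProduct_self_star_nonneg x)

lemma memX_toSkyrmeMap : memX P.toSkyrmeMap := by
  refine memX_ofContDiff _ _ (p := northPole) ?_
  have hangle := hasCompactSupport_comp_dotProduct_self (ι := Fin 3) P.hasCompactSupport_angle
  refine hangle.mono fun x => mt fun hx => ?_
  simp [hedgehogField, amplitude, height, hx, northPole]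

lemma degree_toSkyrmeMap : degree P.toSkyrmeMap = k := by
  have hdet (x : R3) : detDen P.toSkyrmeMap x = hedgehogDet P.amplitude P.height (x ⬝ᵥ x) :=
    det4_hedgehogField P.contDiff_amplitude P.contDiff_height x
  have hradial : ∫ t in Set.Ioi 0, √t • hedgehogDet P.amplitude P.height t = k * π := by
    simp only [smul_eq_mul]
    rw [setIntegral_congr_fun measurableSet_Ioi fun t (ht : 0 < t) => P.sqrt_mul_hedgehogDet ht,
      integral_const_mul, integral_Ioi_sin_sq_mul_deriv P.contDiff_angle P.hasCompactSupport_angle,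
      P.angle_eventuallyEq.eq_of_nhds, Real.sin_two_mul, Real.sin_int_mul_pi]
    ring
  simp only [degree, hdet]
  rw [integral_comp_dotProduct_self, hradial, smul_eq_mul]
  field_simp

end HedgehogProfile

theorem skyrme_lower_bound_general (k : ℤ) : 12 * √2 * |(k : ℝ)| * π ^ 2 ≤ Skyrme.I k := by
  let P := HedgehogProfile.ofBump k default
  refine le_csInf ⟨_, P.toSkyrmeMap, P.memX_toSkyrmeMap, P.degree_toSkyrmeMap, rfl⟩ ?_
  rintro _ ⟨φ, hφ, hdegree, rfl⟩
  exact hdegree ▸ twelve_mul_sqrt_two_mul_abs_degree_le_energy hφ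

/-- 12 |k| π² ≤ I_k. -/
theorem skyrme_lower_bound (k : ℤ) :
    12 * |(k : ℝ)| * π ^ 2 ≤ Skyrme.I k := by
  refine le_trans ?_ (skyrme_lower_bound_general k)
  gcongr
  exact le_mul_of_one_le_right (by norm_num) (Real.one_le_sqrt.2 one_le_two)
end
end

section
/- For every φ ∈ X, ∫_{ℝ³} |∂₁φ∧∂₂φ∧∂₃φ| dx ≥ 2π² |d(φ)|. -/
/- Common setting: Skyrme maps φ : ℝ³ → S³ ⊂ ℝ⁴ with weak partial derivatives. -/

open MeasureTheory Real Filter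
open scoped Topology ENNReal BigOperators

noncomputable section

/-!
The determinant `det(a, u, v, w)` is the inner product of `a` with the triple cross product of
`u, v, w`, whose length is `|u ∧ v ∧ w|`. By Cauchy–Schwarz the degree density of a map into the
sphere is therefore at most its Jacobian in absolute value, and the bound follows by integration.
Finite energy makes the Jacobian integrable: `|u ∧ v|² |w|² - |u ∧ v ∧ w|²` is the squared length
of the contraction of `u ∧ v` with `w`, so by AM-GM the Jacobian is at most the energy density.
-/

/-- The cross product of three vectors of ℝ⁴, that is, the Hodge dual of `u ∧ v ∧ w`: its entries
are the cofactors of the first column of the matrix with columns `·, u, v, w`. -/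
def tripleCross (u v w : R4) : R4 := fun i =>
  (-1) ^ (i : ℕ) * Matrix.det (Matrix.of fun j k : Fin 3 => ![u, v, w] k (i.succAbove j))

lemma det4_eq_dot_tripleCross (a u v w : R4) : det4 a u v w = dot a (tripleCross u v w) := by
  rw [det4, Matrix.det_succ_column_zero]
  refine Finset.sum_congr rfl fun i _ => ?_
  rw [mul_comm ((-1) ^ (i : ℕ)), mul_assoc]
  rfl

lemma tripleCross_eq (u v w : R4) :
    tripleCross u v w =
      ![Matrix.det !![u 1, v 1, w 1; u 2, v 2, w 2; u 3, v 3, w 3],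
        -Matrix.det !![u 0, v 0, w 0; u 2, v 2, w 2; u 3, v 3, w 3],
        Matrix.det !![u 0, v 0, w 0; u 1, v 1, w 1; u 3, v 3, w 3],
        -Matrix.det !![u 0, v 0, w 0; u 1, v 1, w 1; u 2, v 2, w 2]] := by
  ext i
  fin_cases i <;> simp [tripleCross, Matrix.det_fin_three, Fin.succAbove, pow_succ]

/-- Cauchy–Binet for a `4 × 3` matrix. -/
lemma nsq_tripleCross (u v w : R4) : nsq (tripleCross u v w) = gram u v w := by
  simp only [tripleCross_eq, gram, nsq, dot, Matrix.det_fin_three, Fin.sum_univ_four,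
    Matrix.of_apply, Matrix.cons_val]
  ring

lemma dot_sq_le_nsq_mul_nsq (u v : R4) : dot u v ^ 2 ≤ nsq u * nsq v := by
  simpa only [nsq, dot, ← pow_two] using Finset.sum_mul_sq_le_sq_mul_sq Finset.univ u v

lemma nsq_smul_sub_smul (s t : ℝ) (u v : R4) :
    nsq (s • u - t • v) = s ^ 2 * nsq u - 2 * s * t * dot u v + t ^ 2 * nsq v := by
  simp only [nsq, dot, Fin.sum_univ_four, Pi.sub_apply, Pi.smul_apply, smul_eq_mul]
  ring

lemma gram_eq (u v w : R4) :
    gram u v w = nsq u * nsq v * nsq w + 2 * dot u v * dot v w * dot u w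
      - nsq u * dot v w ^ 2 - nsq v * dot u w ^ 2 - nsq w * dot u v ^ 2 := by
  simp only [gram, nsq, Matrix.det_fin_three, Matrix.of_apply, Matrix.cons_val, dot_comm v u,
    dot_comm w u, dot_comm w v]
  ring

lemma wedgeSq_mul_nsq_sub_gram (u v w : R4) :
    wedgeSq u v * nsq w - gram u v w = nsq (dot v w • u - dot u w • v) := by
  rw [nsq_smul_sub_smul, gram_eq, wedgeSq]
  ring

lemma gram_le_wedgeSq_mul_nsq (u v w : R4) : gram u v w ≤ wedgeSq u v * nsq w :=
  sub_nonneg.1 ((nsq_nonneg _).trans_eq (wedgeSq_mul_nsq_sub_gram u v w).symm)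

lemma sqrt_gram_le_nsq_add_wedgeSq (u v w : R4) : √(gram u v w) ≤ nsq w + wedgeSq u v := by
  have hw := nsq_nonneg w
  have huv := wedgeSq_nonneg u v
  refine Real.sqrt_le_iff.2 ⟨by positivity, ?_⟩
  calc gram u v w
    _ ≤ wedgeSq u v * nsq w := gram_le_wedgeSq_mul_nsq u v w
    _ ≤ (nsq w + wedgeSq u v) ^ 2 := by nlinarith

lemma abs_det4_le_sqrt_nsq_mul_sqrt_gram (a u v w : R4) :
    |det4 a u v w| ≤ √(nsq a) * √(gram u v w) := by
  rw [← Real.sqrt_mul (nsq_nonneg a), det4_eq_dot_tripleCross, ← nsq_tripleCross]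
  exact Real.abs_le_sqrt (dot_sq_le_nsq_mul_nsq a _)

lemma continuous_gram : Continuous fun p : R4 × R4 × R4 => gram p.1 p.2.1 p.2.2 := by
  simp only [gram_eq, nsq, dot]
  fun_prop

lemma abs_integral_det4_le {Ω : Type*} [MeasurableSpace Ω] {μ : Measure Ω}
    {a u v w : Ω → R4} (ha : ∀ᵐ x ∂μ, nsq (a x) ≤ 1)
    (hint : Integrable (fun x => √(gram (u x) (v x) (w x))) μ) :
    |∫ x, det4 (a x) (u x) (v x) (w x) ∂μ| ≤ ∫ x, √(gram (u x) (v x) (w x)) ∂μ := by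
  rw [← Real.norm_eq_abs]
  refine norm_integral_le_of_norm_le hint ?_
  filter_upwards [ha] with x hx
  calc |det4 (a x) (u x) (v x) (w x)|
    _ ≤ √(nsq (a x)) * √(gram (u x) (v x) (w x)) := abs_det4_le_sqrt_nsq_mul_sqrt_gram _ _ _ _
    _ ≤ √(gram (u x) (v x) (w x)) :=
        mul_le_of_le_one_left (Real.sqrt_nonneg _) (Real.sqrt_le_one.2 hx)

namespace SkyrmeMap

/-- The Jacobian `|∂₁φ ∧ ∂₂φ ∧ ∂₃φ|`. -/
def jacobian (φ : SkyrmeMap) (x : R3) : ℝ :=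
  √(gram (φ.pderiv 0 x) (φ.pderiv 1 x) (φ.pderiv 2 x))

lemma aestronglyMeasurable_jacobian (φ : SkyrmeMap) : AEStronglyMeasurable φ.jacobian volume := by
  have hp i : AEStronglyMeasurable (φ.pderiv i) volume := (φ.pderiv_locInt i).aestronglyMeasurable
  exact (continuous_gram.comp_aestronglyMeasurable
    ((hp 0).prodMk ((hp 1).prodMk (hp 2)))).aemeasurable.sqrt.aestronglyMeasurable

lemma nsq_pderiv_le_gradSq (φ : SkyrmeMap) (i : Fin 3) (x : R3) :
    nsq (φ.pderiv i x) ≤ gradSq φ x :=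
  Finset.single_le_sum (f := fun i => nsq (φ.pderiv i x)) (fun _ _ => nsq_nonneg _)
    (Finset.mem_univ i)

lemma wedgeSq_pderiv_le_ASq (φ : SkyrmeMap) (i j : Fin 3) (x : R3) :
    wedgeSq (φ.pderiv i x) (φ.pderiv j x) ≤ ASq φ x := by
  have hnonneg k l : 0 ≤ wedgeSq (φ.pderiv k x) (φ.pderiv l x) := wedgeSq_nonneg _ _
  calc wedgeSq (φ.pderiv i x) (φ.pderiv j x)
      ≤ ∑ l, wedgeSq (φ.pderiv i x) (φ.pderiv l x) :=
        Finset.single_le_sum (fun l _ => hnonneg i l) (Finset.mem_univ j)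
    _ ≤ ASq φ x :=
        Finset.single_le_sum (f := fun k => ∑ l, wedgeSq (φ.pderiv k x) (φ.pderiv l x))
          (fun k _ => Finset.sum_nonneg fun l _ => hnonneg k l) (Finset.mem_univ i)

lemma jacobian_le_energyDensity (φ : SkyrmeMap) (x : R3) : φ.jacobian x ≤ energyDensity φ x :=
  (sqrt_gram_le_nsq_add_wedgeSq _ _ _).trans
    (add_le_add (φ.nsq_pderiv_le_gradSq 2 x) (φ.wedgeSq_pderiv_le_ASq 0 1 x))

lemma integrable_jacobian_of_memX {φ : SkyrmeMap} (hφ : memX φ) : Integrable φ.jacobian volume :=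
  hφ.mono' φ.aestronglyMeasurable_jacobian <| ae_of_all _ fun x =>
    (Real.norm_of_nonneg (Real.sqrt_nonneg _)).trans_le (φ.jacobian_le_energyDensity x)

lemma two_pi_sq_mul_abs_degree (φ : SkyrmeMap) :
    2 * π ^ 2 * |degree φ| = |∫ x, detDen φ x| := by
  have hpos : 0 < 2 * π ^ 2 := by positivity
  rw [degree, abs_mul, abs_of_pos (one_div_pos.2 hpos), ← mul_assoc, mul_one_div_cancel hpos.ne',
    one_mul]

end SkyrmeMap

theorem skyrme_jacobian_degree_bound_general (φ : SkyrmeMap)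
    (hint : Integrable φ.jacobian volume) :
    2 * π ^ 2 * |degree φ| ≤ ∫ x, φ.jacobian x := by
  rw [φ.two_pi_sq_mul_abs_degree]
  exact abs_integral_det4_le (φ.sphere.mono fun _ hx => hx.le) hint

/-- ∫ |∂₁φ∧∂₂φ∧∂₃φ| ≥ 2π² |d(φ)|. -/
theorem skyrme_jacobian_degree_bound (φ : SkyrmeMap) (hφ : memX φ) :
    2 * π ^ 2 * |degree φ|
      ≤ ∫ x, Real.sqrt (gram (φ.pderiv 0 x) (φ.pderiv 1 x) (φ.pderiv 2 x)) :=
  skyrme_jacobian_degree_bound_general φ (SkyrmeMap.integrable_jacobian_of_memX hφ)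
end
end
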